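/- Let M be a continuous von Neumann algebra and p ∈ M a projection. Then every triple homomorphism from the JC*-triple pM into ℂ is identically zero; that is, pM does not admit a nonzero triple homomorphism onto ℂ. -/

import Mathlib

open ContinuousLinearMap

noncomputable section

variable {H : Type} [NormedAddCommGroup H] [InnerProductSpace ℂ H] [CompleteSpace H]

/-- The ternary product `x y* z` of bounded operators. -/
def tri (x y z : H →L[ℂ] H) : H →L[ℂ] H := x ∘L (adjoint y) ∘L z

/-- The Jordan triple product `{x,y,z} = (x y* z + z y* x)/2`. -/
def jtri (x y z : H →L[ℂ] H) : H →L[ℂ] H := (2 : ℂ)⁻¹ • (tri x y z + tri z y x)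

/-- A projection in `B(H)`. -/
def IsProjection (p : H →L[ℂ] H) : Prop := IsSelfAdjoint p ∧ p * p = p

/-- A von Neumann algebra is continuous if it contains no nonzero abelian projection,
i.e. no nonzero projection `q` with `qMq` commutative. -/
def IsContinuousVNA (M : VonNeumannAlgebra H) : Prop :=
  ∀ q : H →L[ℂ] H, q ∈ M → IsProjection q →
    (∀ x ∈ M, ∀ y ∈ M, (q * x * q) * (q * y * q) = (q * y * q) * (q * x * q)) → q = 0

/-- The JC*-triple `pM = {p x : x ∈ M}` associated to a projection `p` in a
von Neumann algebra `M`. -/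
def corner (M : VonNeumannAlgebra H) (p : H →L[ℂ] H) : Submodule ℂ (H →L[ℂ] H) :=
  (Subalgebra.toSubmodule M.toStarSubalgebra.toSubalgebra).map (LinearMap.mulLeft ℂ p)


theorem exists_supp (X : Set (H →L[ℂ] H)) : ∃ P : H →L[ℂ] H, star P = P ∧ P * P = P ∧
    (∀ x ∈ X, P * x = x) ∧ (∀ y : H →L[ℂ] H, (∀ x ∈ X, y * x = 0) → y * P = 0) := by
  let K : Submodule ℂ H := (⨆ x ∈ X, LinearMap.range (x : H →ₗ[ℂ] H)).topologicalClosure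
  have : CompleteSpace K := (Submodule.isClosed_topologicalClosure _).completeSpace_coe
  refine ⟨K.starProjection, isSelfAdjoint_starProjection K, K.isIdempotentElem_starProjection, ?_, ?_⟩
  · intro x hx
    ext h
    refine Submodule.starProjection_eq_self_iff.2 ?_
    apply Submodule.le_topologicalClosure
    exact Submodule.mem_iSup_of_mem x (Submodule.mem_iSup_of_mem hx ⟨h, rfl⟩)
  · intro y hy
    have h1 : K ≤ LinearMap.ker (y : H →ₗ[ℂ] H) := by
      apply Submodule.topologicalClosure_minimal
      · refine iSup₂_le fun x hx => ?_
        rintro _ ⟨h, rfl⟩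
        have := congrArg (fun z : H →L[ℂ] H => z h) (hy x hx)
        simpa using this
      · exact y.isClosed_ker
    ext h
    exact h1 (K.starProjection_apply_mem h)

theorem supp_commute {P z : H →L[ℂ] H} {X : Set (H →L[ℂ] H)} (h1 : star P = P)
    (h3 : ∀ x ∈ X, P * x = x)
    (h4 : ∀ y : H →L[ℂ] H, (∀ x ∈ X, y * x = 0) → y * P = 0)
    (hz : ∀ x ∈ X, z * x = x * z) (hz' : ∀ x ∈ X, star z * x = x * star z) : z * P = P * z := by
  have a1 : (P * z - z) * P = 0 := h4 _ fun x hx => by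
    rw [sub_mul, mul_assoc, hz x hx, ← mul_assoc, h3 x hx, sub_self]
  have a2 : (P * star z - star z) * P = 0 := h4 _ fun x hx => by
    rw [sub_mul, mul_assoc, hz' x hx, ← mul_assoc, h3 x hx, sub_self]
  have a3 := congrArg star a2
  simp only [star_mul, star_sub, star_star, h1, star_zero] at a3
  linear_combination (norm := noncomm_ring) a3 - a1

theorem mem_of_commutant (M : VonNeumannAlgebra H) {P : H →L[ℂ] H}
    (h : ∀ z ∈ M.commutant, z * P = P * z) : P ∈ M := by
  rw [← M.commutant_commutant, VonNeumannAlgebra.mem_commutant_iff]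
  exact h

theorem supp_mem (M : VonNeumannAlgebra H) {P : H →L[ℂ] H} {X : Set (H →L[ℂ] H)} (h1 : star P = P)
    (h3 : ∀ x ∈ X, P * x = x)
    (h4 : ∀ y : H →L[ℂ] H, (∀ x ∈ X, y * x = 0) → y * P = 0) (hX : ∀ x ∈ X, x ∈ M) : P ∈ M := by
  refine mem_of_commutant M fun z hz => supp_commute h1 h3 h4 (fun x hx => ?_) (fun x hx => ?_)
  · exact (VonNeumannAlgebra.mem_commutant_iff.1 hz x (hX x hx)).symm
  · exact (VonNeumannAlgebra.mem_commutant_iff.1 (star_mem hz) x (hX x hx)).symm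

theorem exists_jordan (a : H →L[ℂ] H) (ha : star a = a) : ∃ P N : H →L[ℂ] H, 0 ≤ P ∧ 0 ≤ N ∧
    a = P - N ∧ P * N = 0 ∧ N * P = 0 ∧ (∀ z, z * a = a * z → z * P = P * z ∧ z * N = N * z) ∧
    (∀ V, V * a = - (a * V) → V * P = N * V) := by
  have hs : IsSelfAdjoint a := ha
  have e1 : a⁺ - a⁻ = a := CFC.posPart_sub_negPart a hs
  refine ⟨a⁺, a⁻, CFC.posPart_nonneg a, CFC.negPart_nonneg a, e1.symm, by simp, by simp, ?_, ?_⟩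
  · intro z hz
    have hz' : Commute a z := hz.symm
    rw [CFC.posPart_def, CFC.negPart_def]
    exact ⟨(hz'.cfcₙ_real _).symm, (hz'.cfcₙ_real _).symm⟩
  · intro V hV
    have e2 : CFC.abs a = a⁺ + a⁻ := (CFC.posPart_add_negPart a hs).symm
    have hc : Commute (CFC.abs a) V := by
      apply Commute.cfcₙ_nnreal
      rw [ha]
      change a * a * V = V * (a * a)
      linear_combination (norm := noncomm_ring) a * hV - hV * a
    rw [e2] at hc
    have hc' : (a⁺ + a⁻) * V = V * (a⁺ + a⁻) := hc
    rw [← e1] at hV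
    have : (2:ℂ) • (V * a⁺) = (2:ℂ) • (a⁻ * V) := by
      rw [two_smul, two_smul]
      linear_combination (norm := noncomm_ring) hV - hc'
    exact smul_right_injective _ two_ne_zero this

theorem exists_sign (Xp Xm : Set (H →L[ℂ] H)) (hsm : ∀ x ∈ Xm, star x = x)
    (h0 : ∀ x ∈ Xp, ∀ y ∈ Xm, y * x = 0) :
    ∃ A : H →L[ℂ] H, star A = A ∧ A * A * A = A ∧ (∀ x ∈ Xp, A * x = x) ∧
    (∀ x ∈ Xm, A * x = -x) ∧
    (∀ y : H →L[ℂ] H, (∀ x ∈ Xp, y * x = 0) → (∀ x ∈ Xm, y * x = 0) → y * A = 0) ∧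
    (∀ M : VonNeumannAlgebra H, (∀ x ∈ Xp, x ∈ M) → (∀ x ∈ Xm, x ∈ M) → A ∈ M) := by
  obtain ⟨P, p1, p2, p3, p4⟩ := exists_supp Xp
  obtain ⟨N, n1, n2, n3, n4⟩ := exists_supp Xm
  have e1 : ∀ y ∈ Xm, y * P = 0 := fun y hy => p4 y fun x hx => h0 x hx y hy
  have e2 : ∀ y ∈ Xm, P * y = 0 := fun y hy => by
    have := congrArg star (e1 y hy)
    simpa only [star_mul, p1, hsm y hy, star_zero] using this
  have e3 : P * N = 0 := n4 P e2
  have e4 : N * P = 0 := by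
    have := congrArg star e3
    simpa only [star_mul, p1, n1, star_zero] using this
  refine ⟨P - N, by rw [star_sub, p1, n1], ?_, ?_, ?_, ?_, ?_⟩
  · simp [sub_mul, mul_sub, add_mul, e3, e4, p2, n2]
  · intro x hx
    have : N * x = 0 := by rw [← p3 x hx, ← mul_assoc, e4, zero_mul]
    rw [sub_mul, p3 x hx, this, sub_zero]
  · intro x hx
    rw [sub_mul, n3 x hx, e2 x hx, zero_sub]
  · intro y h h'
    rw [mul_sub, p4 y h, n4 y h', sub_zero]
  · intro M h h'
    exact sub_mem (supp_mem M p1 p3 p4 h) (supp_mem M n1 n3 n4 h')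

theorem two_cancel {x y : H →L[ℂ] H} (h : x + x = y + y) : x = y := by
  have : (2:ℂ) • x = (2:ℂ) • y := by rwa [two_smul, two_smul]
  exact smul_right_injective _ two_ne_zero this

theorem exists_glue (S : Set (H →L[ℂ] H)) (hs : ∀ x ∈ S, star x = x) (h3 : ∀ x ∈ S, x * x * x = x)
    (h0 : ∀ x ∈ S, ∀ y ∈ S, x ≠ y → x * y = 0) :
    ∃ A : H →L[ℂ] H, star A = A ∧ A * A * A = A ∧ (∀ x ∈ S, A * x = x * x) ∧
    (∀ y : H →L[ℂ] H, (∀ x ∈ S, y * x = 0) → y * A = 0) ∧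
    (∀ M : VonNeumannAlgebra H, (∀ x ∈ S, x ∈ M) → A ∈ M) := by
  obtain ⟨A, a1, a2, a3, a4, a5, a6⟩ := exists_sign ((fun a => a * a + a) '' S)
    ((fun a => a * a - a) '' S) (by
      rintro _ ⟨a, ha, rfl⟩
      simp only [star_sub, star_mul, hs a ha]) (by
      rintro _ ⟨a, ha, rfl⟩ _ ⟨b, hb, rfl⟩
      by_cases hab : b = a
      · subst hab
        simp only
        linear_combination (norm := noncomm_ring) b * h3 b hb
      · simp only
        linear_combination (norm := noncomm_ring) b * h0 b hb a ha hab * a + b * h0 b hb a ha hab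
          - h0 b hb a ha hab * a - h0 b hb a ha hab)
  refine ⟨A, a1, a2, ?_, ?_, ?_⟩
  · intro x hx
    have h1 := a3 _ ⟨x, hx, rfl⟩
    have h2 := a4 _ ⟨x, hx, rfl⟩
    simp only at h1 h2
    apply two_cancel
    linear_combination (norm := noncomm_ring) h1 - h2
  · intro y hy
    refine a5 y ?_ ?_
    · rintro _ ⟨a, ha, rfl⟩
      simp only
      linear_combination (norm := noncomm_ring) hy a ha * a + hy a ha
    · rintro _ ⟨a, ha, rfl⟩
      simp only
      linear_combination (norm := noncomm_ring) hy a ha * a - hy a ha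
  · intro M hM
    refine a6 M ?_ ?_
    · rintro _ ⟨a, ha, rfl⟩
      exact add_mem (mul_mem (hM a ha) (hM a ha)) (hM a ha)
    · rintro _ ⟨a, ha, rfl⟩
      exact sub_mem (mul_mem (hM a ha) (hM a ha)) (hM a ha)

/-- A pair of anticommuting self-adjoint partial symmetries with common support below `r`. -/
structure IsPair (M : VonNeumannAlgebra H) (r s t : H →L[ℂ] H) : Prop where
  sM : s ∈ M
  tM : t ∈ M
  ss : star s = s
  st : star t = t
  s3 : s * s * s = s
  tt : t * t = s * s
  anti : s * t = -(t * s)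
  rs : r * s = s

theorem pair_of_nilpotent (M : VonNeumannAlgebra H) {r e x : H →L[ℂ] H} (hr : star r = r)
    (he : star e = e)
    (hee : e * e = e) (heM : e ∈ M) (hxM : x ∈ M) (hex : e * x = x) (hxe : x * e = 0)
    (hrx : r * x = x) (hxr : x * r = x) (hx0 : x ≠ 0) :
    ∃ s t, IsPair M r s t ∧ s ≠ 0 := by
  have hex' : star x * e = star x := by
    have := congrArg star hex
    simpa only [star_mul, he] using this
  have hxe' : e * star x = 0 := by
    have := congrArg star hxe
    simpa only [star_mul, he, star_zero] using this
  have hxr' : r * star x = star x := by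
    have := congrArg star hxr
    simpa only [star_mul, hr] using this
  obtain ⟨S, hS⟩ : ∃ S, S = x + star x := ⟨_, rfl⟩
  have hSs : star S = S := by rw [hS, star_add, star_star, add_comm]
  obtain ⟨V, hV⟩ : ∃ V, V = e + e - 1 := ⟨_, rfl⟩
  have hVs : star V = V := by rw [hV, star_sub, star_add, he, star_one]
  have hVV : V * V = 1 := by
    rw [hV]; linear_combination (norm := noncomm_ring) 4 * hee
  have hVS : V * S = -(S * V) := by
    rw [hV, hS]
    linear_combination (norm := noncomm_ring) 2 * hex + 2 * hxe + 2 * hex' + 2 * hxe'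
  have hSM : S ∈ M := hS ▸ add_mem hxM (star_mem hxM)
  have hVM : V ∈ M := hV ▸ sub_mem (add_mem heM heM) (one_mem M)
  have hS0 : S ≠ 0 := by
    intro h
    apply hx0
    have : e * S = x := by rw [hS, mul_add, hex, hxe', add_zero]
    rw [← this, h, mul_zero]
  have hrS : r * S = S := by rw [hS, mul_add, hrx, hxr']
  obtain ⟨P, N, hP0, hN0, hPN, hPN0, hNP0, hcomm, hanti⟩ := exists_jordan S hSs
  have hPs : star P = P := IsSelfAdjoint.of_nonneg hP0
  have hNs : star N = N := IsSelfAdjoint.of_nonneg hN0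
  have hVP : V * P = N * V := hanti V hVS
  have hVN : V * N = P * V := by
    have := congrArg star hVP
    simpa only [star_mul, hPs, hNs, hVs] using this.symm
  have hzS : ∀ z ∈ M.commutant, z * S = S * z := fun z hz =>
    (VonNeumannAlgebra.mem_commutant_iff.1 hz S hSM).symm
  have hPM : P ∈ M := mem_of_commutant M fun z hz => (hcomm z (hzS z hz)).1
  have hNM : N ∈ M := mem_of_commutant M fun z hz => (hcomm z (hzS z hz)).2
  have hrS' : (1 - r) * (P - N) = 0 := by rw [← hPN, sub_mul, hrS, one_mul, sub_self]
  have hrP : (1 - r) * P = 0 := by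
    apply CStarRing.mul_star_self_eq_zero_iff _ |>.1
    simp only [star_mul, star_sub, star_one, hPs, hr]
    linear_combination (norm := noncomm_ring) hrS' * P * (1 - r) + (1 - r) * hNP0 * (1 - r)
  have hrN : (1 - r) * N = 0 := by
    linear_combination (norm := noncomm_ring) hrP - hrS'
  obtain ⟨A, a1, a2, a3, a4, a5, a6⟩ := exists_sign {P} {N} (by simpa using hNs)
    (by simpa using hNP0)
  simp only [Set.mem_singleton_iff, forall_eq] at a3 a4 a5 a6
  have b1 : (V * A + A * V) * A = 0 := by
    apply a5
    · linear_combination (norm := noncomm_ring) V * a3 + A * hVP + a4 * V + hVP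
    · linear_combination (norm := noncomm_ring) V * a4 + A * hVN + a3 * V - hVN
  have b2 : A * (A * V + V * A) = 0 := by
    have := congrArg star b1
    simpa only [star_mul, star_add, hVs, a1, star_zero] using this
  have b3 : V * A = -(A * V) := by
    linear_combination (norm := noncomm_ring) - V * a2 - a2 * V + b1 * A + A * b2 - A * b1
  refine ⟨A, V * (A * A), ⟨a6 M hPM hNM, mul_mem hVM (mul_mem (a6 M hPM hNM) (a6 M hPM hNM)),
    a1, ?_, a2, ?_, ?_, ?_⟩, ?_⟩
  · simp only [star_mul, hVs, a1]
    linear_combination (norm := noncomm_ring) A * b3 - b3 * A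
  · have : V * (A * A) = A * A * V := by
      linear_combination (norm := noncomm_ring) b3 * A - A * b3
    linear_combination (norm := noncomm_ring) V * (A * A) * this + V * A * a2 * V + this * V
      + A * A * hVV
  · linear_combination (norm := noncomm_ring) b3 * A * A
  · have : (1 - r) * A = 0 := a5 _ hrP hrN
    linear_combination (norm := noncomm_ring) - this
  · intro h
    apply hS0
    rw [h, zero_mul] at a3 a4
    rw [hPN, ← a3, ← neg_neg N, ← a4]; simp

theorem exists_double (a : H →L[ℂ] H) (h0 : 0 ≤ a) (h1 : a ≤ 1) :
    ∃ e : H →L[ℂ] H, star e = e ∧ e * e = e ∧ 0 ≤ a + a - e ∧ a + a - e ≤ 1 ∧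
      (∀ M : VonNeumannAlgebra H, a ∈ M → e ∈ M) ∧
      (∀ z, z * a = a * z → star z * a = a * star z → z * e = e * z) := by
  have has : star a = a := IsSelfAdjoint.of_nonneg h0
  obtain ⟨P, N, hP0, hN0, hPN, hPN0, hNP0, hcomm, -⟩ := exists_jordan (a + a - 1)
    (by rw [star_sub, star_add, has, star_one])
  have hPs : star P = P := IsSelfAdjoint.of_nonneg hP0
  have hNs : star N = N := IsSelfAdjoint.of_nonneg hN0
  obtain ⟨e, e1, e2, e3, e4⟩ := exists_supp {P}
  have hz : ∀ z, z * a = a * z → z * P = P * z := fun z hz => (hcomm z (by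
    linear_combination (norm := noncomm_ring) 2 * hz)).1
  have hcz : ∀ z, z * a = a * z → star z * a = a * star z → z * e = e * z := by
    intro z h h'
    refine supp_commute e1 e3 e4 ?_ ?_
    · simpa using hz z h
    · simpa using hz _ h'
  simp only [Set.mem_singleton_iff, forall_eq] at e3 e4
  have f1 : P * e = P := by
    have := congrArg star e3
    simpa only [star_mul, hPs, e1] using this
  have f2 : N * e = 0 := e4 N hNP0
  have f3 : e * N = 0 := by
    have := congrArg star f2
    simpa only [star_mul, hNs, e1, star_zero] using this
  have g1 : 0 ≤ (1 - e) * (a + a) * (1 - e) := 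
    IsSelfAdjoint.conjugate_nonneg (add_nonneg h0 h0) (by
      change star (1 - e) = 1 - e
      rw [star_sub, star_one, e1])
  have g2 : 0 ≤ e * ((1 - a) + (1 - a)) * e :=
    IsSelfAdjoint.conjugate_nonneg (add_nonneg (sub_nonneg.2 h1) (sub_nonneg.2 h1)) e1
  refine ⟨e, e1, e2, ?_, ?_, ?_, hcz⟩
  · have : a + a - e = (1 - e) * (a + a) * (1 - e) + P := by
      linear_combination (norm := noncomm_ring) hPN - (1 - e) * hPN * (1 - e) - e2 + e3 * (1 - e)
        - f2 - f3 * (1 - e)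
    rw [this]; exact add_nonneg g1 hP0
  · rw [← sub_nonneg]
    have : 1 - (a + a - e) = e * ((1 - a) + (1 - a)) * e + N := by
      linear_combination (norm := noncomm_ring) -hPN + e * hPN * e - e2 - f3 * e + e3 * e + f1
    rw [this]; exact add_nonneg g2 hN0
  · intro M hM
    refine mem_of_commutant M fun z hz' => hcz z ?_ ?_
    · exact (VonNeumannAlgebra.mem_commutant_iff.1 hz' a hM).symm
    · exact (VonNeumannAlgebra.mem_commutant_iff.1 (star_mem hz') a hM).symm

theorem commute_of_proj (M : VonNeumannAlgebra H) {r b : H →L[ℂ] H} (hr : star r = r)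
    (hcomm : ∀ e ∈ M, star e = e → e * e = e → r * e = e * r → e * b = b * e)
    (n : ℕ) : ∀ a ∈ M, 0 ≤ a → a ≤ 1 → r * a = a * r →
      2 ^ n * ‖a * b - b * a‖ ≤ 2 * ‖b‖ := by
  induction n with
  | zero =>
    intro a _ h0 h1 _
    have : ‖a‖ ≤ 1 := (CStarAlgebra.norm_le_one_iff_of_nonneg a h0).2 h1
    calc (2:ℝ) ^ 0 * ‖a * b - b * a‖ = ‖a * b - b * a‖ := by simp
      _ ≤ ‖a * b‖ + ‖b * a‖ := norm_sub_le _ _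
      _ ≤ ‖a‖ * ‖b‖ + ‖b‖ * ‖a‖ := add_le_add (norm_mul_le _ _) (norm_mul_le _ _)
      _ ≤ 2 * ‖b‖ := by nlinarith [norm_nonneg b]
  | succ n ih =>
    intro a haM h0 h1 hra
    obtain ⟨e, e1, e2, e3, e4, e5, e6⟩ := exists_double a h0 h1
    have hre : r * e = e * r := e6 r hra (by rwa [hr])
    have := ih (a + a - e) (sub_mem (add_mem haM haM) (e5 M haM)) e3 e4
      (by linear_combination (norm := noncomm_ring) 2 * hra - hre)
    have heb := hcomm e (e5 M haM) e1 e2 hre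
    have h2 : (a + a - e) * b - b * (a + a - e) = (2:ℝ) • (a * b - b * a) := by
      rw [two_smul]
      linear_combination (norm := noncomm_ring) - heb
    rw [h2, norm_smul] at this
    simp only [Real.norm_ofNat] at this
    rw [pow_succ]; linarith

theorem commute_of_proj' (M : VonNeumannAlgebra H) {r b : H →L[ℂ] H} (hr : star r = r)
    (hcomm : ∀ e ∈ M, star e = e → e * e = e → r * e = e * r → e * b = b * e)
    (a : H →L[ℂ] H) (haM : a ∈ M) (h0 : 0 ≤ a) (h1 : a ≤ 1) (hra : r * a = a * r) :
    a * b = b * a := by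
  rw [← sub_eq_zero, ← norm_eq_zero]
  by_contra hne
  have hpos : 0 < ‖a * b - b * a‖ := lt_of_le_of_ne (norm_nonneg _) (Ne.symm hne)
  obtain ⟨n, hn⟩ := pow_unbounded_of_one_lt (2 * ‖b‖ / ‖a * b - b * a‖) (one_lt_two (α := ℝ))
  have := commute_of_proj M hr hcomm n a haM h0 h1 hra
  rw [div_lt_iff₀ hpos] at hn
  linarith

theorem smul_mem_vn (M : VonNeumannAlgebra H) (c : ℂ) {x : H →L[ℂ] H} (hx : x ∈ M) : c • x ∈ M :=
  M.toStarSubalgebra.smul_mem hx c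

theorem commute_of_proj_sa (M : VonNeumannAlgebra H) {r b : H →L[ℂ] H} (hr : star r = r)
    (hcomm : ∀ e ∈ M, star e = e → e * e = e → r * e = e * r → e * b = b * e)
    (a : H →L[ℂ] H) (haM : a ∈ M) (has : star a = a) (hra : r * a = a * r) :
    a * b = b * a := by
  obtain ⟨P, N, hP0, hN0, hPN, hPN0, hNP0, hc, -⟩ := exists_jordan a has
  have hzS : ∀ z ∈ M.commutant, z * a = a * z := fun z hz =>
    (VonNeumannAlgebra.mem_commutant_iff.1 hz a haM).symm
  have hPM : P ∈ M := mem_of_commutant M fun z hz => (hc z (hzS z hz)).1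
  have hNM : N ∈ M := mem_of_commutant M fun z hz => (hc z (hzS z hz)).2
  have key : ∀ Q ∈ M, 0 ≤ Q → r * Q = Q * r → Q * b = b * Q := by
    intro Q hQM hQ0 hrQ
    by_cases hn : ‖Q‖ = 0
    · rw [norm_eq_zero.1 hn]; simp
    have hn' : (0:ℝ) ≤ ‖Q‖⁻¹ := by positivity
    have h0 : 0 ≤ ‖Q‖⁻¹ • Q := smul_nonneg hn' hQ0
    have h1 : ‖Q‖⁻¹ • Q ≤ 1 := by
      rw [← CStarAlgebra.norm_le_one_iff_of_nonneg _ h0, norm_smul]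
      simp [hn]
    have hM' : ‖Q‖⁻¹ • Q ∈ M := by
      have := smul_mem_vn M ((‖Q‖⁻¹ : ℝ) : ℂ) hQM
      rwa [Complex.coe_smul] at this
    have := commute_of_proj' M hr hcomm _ hM' h0 h1 (by
      rw [mul_smul_comm, smul_mul_assoc, hrQ])
    rw [mul_smul_comm, smul_mul_assoc] at this
    exact smul_right_injective _ (inv_ne_zero hn) this
  have k1 := key P hPM hP0 (hc r hra).1
  have k2 := key N hNM hN0 (hc r hra).2
  rw [hPN, sub_mul, mul_sub, k1, k2]

theorem exists_local_pair (M : VonNeumannAlgebra H) (hM : IsContinuousVNA M) {r : H →L[ℂ] H}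
    (hr : star r = r) (hrr : r * r = r) (hrM : r ∈ M) (hr0 : r ≠ 0) :
    ∃ s t, IsPair M r s t ∧ s ≠ 0 := by
  by_contra hno
  apply hr0
  have hproj : ∀ b ∈ M, r * b = b → b * r = b → ∀ e ∈ M, star e = e → e * e = e →
      r * e = e * r → e * b = b * e := by
    have half : ∀ b ∈ M, ∀ e ∈ M, star e = e → e * e = e → r * e = e → e * r = e →
        e * b * (r - e) = 0 := by
      intro b hb e heM e1 e2 hre her
      by_contra hx0
      refine hno (pair_of_nilpotent M hr e1 e2 heM
        (mul_mem (mul_mem heM hb) (sub_mem hrM heM)) ?_ ?_ ?_ ?_ hx0)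
      · linear_combination (norm := noncomm_ring) e2 * b * (r - e)
      · linear_combination (norm := noncomm_ring) e * b * hre - e * b * e2
      · linear_combination (norm := noncomm_ring) hre * b * (r - e)
      · linear_combination (norm := noncomm_ring) e * b * hrr - e * b * her
    intro b hb hrb hbr e heM e1 e2 hre
    have q1 : star (e * r) = e * r := by rw [star_mul, e1, hr, hre]
    have q2 : e * r * (e * r) = e * r := by
      linear_combination (norm := noncomm_ring) e * hre * r + e2 * r * r + e * hrr
    have q3 : r * (e * r) = e * r := by
      linear_combination (norm := noncomm_ring) hre * r + e * hrr
    have q4 : e * r * r = e * r := by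
      linear_combination (norm := noncomm_ring) e * hrr
    have m1 := half b hb _ (mul_mem heM hrM) q1 q2 q3 q4
    have m2 := congrArg star (half (star b) (star_mem hb) _ (mul_mem heM hrM) q1 q2 q3 q4)
    simp only [star_mul, star_sub, star_star, q1, hr, star_zero, e1] at m2
    have m3 : e * r * b = e * b := by rw [mul_assoc, hrb]
    have m4 : b * (e * r) = b * e := by rw [← hre, ← mul_assoc, hbr]
    have m5 : e * r * b * (r - e * r) = e * b - e * b * (e * r) := by
      rw [m3, mul_sub, mul_assoc, hbr]
    have m6 : (r - e * r) * (b * (e * r)) = b * e - e * b * e := by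
      rw [m4, sub_mul, ← mul_assoc, ← mul_assoc, hrb, m3]
    rw [m5] at m1
    rw [m6] at m2
    have m7 : e * b * (e * r) = e * b * e := by rw [mul_assoc, m4, ← mul_assoc]
    rw [m7] at m1
    rw [sub_eq_zero.1 m1, sub_eq_zero.1 m2]
  refine hM r hrM ⟨hr, hrr⟩ fun x hx y hy => ?_
  have cM : ∀ z ∈ M, r * z * r ∈ M := fun z hz => mul_mem (mul_mem hrM hz) hrM
  have cl : ∀ z, r * (r * z * r) = r * z * r := fun z => by
    linear_combination (norm := noncomm_ring) hrr * z * r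
  have cr : ∀ z, (r * z * r) * r = r * z * r := fun z => by
    linear_combination (norm := noncomm_ring) r * z * hrr
  obtain ⟨b, hb⟩ : ∃ b, b = r * y * r := ⟨_, rfl⟩
  obtain ⟨a, ha⟩ : ∃ a, a = r * x * r := ⟨_, rfl⟩
  rw [← hb, ← ha]
  have hbM : b ∈ M := hb ▸ cM y hy
  have haM : a ∈ M := ha ▸ cM x hx
  have hbl : r * b = b := hb ▸ cl y
  have hbr : b * r = b := hb ▸ cr y
  have hal : r * a = a := ha ▸ cl x
  have har : a * r = a := ha ▸ cr x
  have hal' : star a * r = star a := by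
    have := congrArg star hal
    simpa only [star_mul, hr] using this
  have har' : r * star a = star a := by
    have := congrArg star har
    simpa only [star_mul, hr] using this
  have hcomm := hproj b hbM hbl hbr
  have k1 := commute_of_proj_sa M hr hcomm (a + star a) (add_mem haM (star_mem haM))
    (by rw [star_add, star_star, add_comm]) (by rw [mul_add, add_mul, hal, har, hal', har'])
  have k2 := commute_of_proj_sa M hr hcomm (Complex.I • (a - star a))
    (smul_mem_vn M _ (sub_mem haM (star_mem haM)))
    (by
      rw [star_smul, star_sub, star_star, Complex.star_def, Complex.conj_I, neg_smul, ← smul_neg,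
        neg_sub])
    (by rw [mul_smul_comm, smul_mul_assoc, mul_sub, sub_mul, hal, har, hal', har'])
  rw [mul_smul_comm, smul_mul_assoc] at k2
  have k3 := smul_right_injective _ Complex.I_ne_zero k2
  apply two_cancel
  linear_combination (norm := noncomm_ring) k1 + k3

theorem exists_full_pair (M : VonNeumannAlgebra H) (hM : IsContinuousVNA M) {p : H →L[ℂ] H}
    (hp : star p = p) (hpp : p * p = p) (hpM : p ∈ M) :
    ∃ s t, s ∈ M ∧ t ∈ M ∧ star s = s ∧ star t = t ∧ s * s = p ∧ t * t = p ∧ s * t + t * s = 0 := by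
  obtain ⟨S, hS, hmax⟩ := zorn_subset
    {S : Set ((H →L[ℂ] H) × (H →L[ℂ] H)) | (∀ x ∈ S, IsPair M p x.1 x.2) ∧
      ∀ x ∈ S, ∀ y ∈ S, x ≠ y → x.1 * y.1 = 0} (by
    intro c hc hchain
    refine ⟨⋃₀ c, ⟨?_, ?_⟩, fun s hs => Set.subset_sUnion_of_mem hs⟩
    · rintro x ⟨s, hs, hx⟩
      exact (hc hs).1 x hx
    · rintro x ⟨s, hs, hx⟩ y ⟨s', hs', hy⟩ hxy
      rcases hchain.total hs hs' with h | h
      · exact (hc hs').2 x (h hx) y hy hxy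
      · exact (hc hs).2 x hx y (h hy) hxy)
  obtain ⟨hpair, horth⟩ := hS
  have horth2 : ∀ x ∈ S, ∀ y ∈ S, x ≠ y → x.2 * y.2 = 0 := by
    intro x hx y hy hxy
    have h := horth x hx y hy hxy
    have X := hpair x hx
    have Y := hpair y hy
    have h1 : star (x.2 * y.2) * (x.2 * y.2) = 0 := by
      rw [star_mul, X.st, Y.st]
      have : x.1 * y.2 = 0 := by
        apply CStarRing.mul_star_self_eq_zero_iff _ |>.1
        rw [star_mul, X.ss, Y.st]
        linear_combination (norm := noncomm_ring) x.1 * Y.tt * x.1 + h * y.1 * x.1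
      linear_combination (norm := noncomm_ring) y.2 * X.tt * y.2 + y.2 * x.1 * this
    exact CStarRing.star_mul_self_eq_zero_iff _ |>.1 h1
  have t3 : ∀ x ∈ S, x.2 * x.2 * x.2 = x.2 := by
    intro x hx
    have X := hpair x hx
    have h0 : (x.2 * x.2 * x.2 - x.2) = 0 := by
      apply CStarRing.mul_star_self_eq_zero_iff _ |>.1
      simp only [star_mul, star_sub, X.st]
      have e : x.2 * x.2 * (x.2 * x.2) = x.2 * x.2 := by
        rw [X.tt]
        linear_combination (norm := noncomm_ring) x.1 * X.s3
      linear_combination (norm := noncomm_ring) e * (x.2 * x.2) - e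
    exact sub_eq_zero.1 h0
  obtain ⟨s, s1, s2, s3, s4, s5⟩ := exists_glue (Prod.fst '' S)
    (by rintro _ ⟨x, hx, rfl⟩; exact (hpair x hx).ss)
    (by rintro _ ⟨x, hx, rfl⟩; exact (hpair x hx).s3)
    (by
      rintro _ ⟨x, hx, rfl⟩ _ ⟨y, hy, rfl⟩ hxy
      exact horth x hx y hy (fun h => hxy (by rw [h])))
  obtain ⟨t, t1, t2, t3', t4, t5⟩ := exists_glue (Prod.snd '' S)
    (by rintro _ ⟨x, hx, rfl⟩; exact (hpair x hx).st)
    (by rintro _ ⟨x, hx, rfl⟩; exact t3 x hx)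
    (by
      rintro _ ⟨x, hx, rfl⟩ _ ⟨y, hy, rfl⟩ hxy
      exact horth2 x hx y hy (fun h => hxy (by rw [h])))
  have sM : s ∈ M := s5 M (by rintro _ ⟨x, hx, rfl⟩; exact (hpair x hx).sM)
  have tM : t ∈ M := t5 M (by rintro _ ⟨x, hx, rfl⟩; exact (hpair x hx).tM)
  simp only [Set.forall_mem_image] at s3 s4 t3' t4
  have u1 : ∀ x ∈ S, s * s * x.1 = x.1 := fun x hx => by
    linear_combination (norm := noncomm_ring) s * s3 hx + s3 hx * x.1 + (hpair x hx).s3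
  have u2 : ∀ x ∈ S, t * t * x.2 = x.2 := fun x hx => by
    linear_combination (norm := noncomm_ring) t * t3' hx + t3' hx * x.2 + t3 x hx
  have u3 : ∀ x ∈ S, x.1 = x.2 * (x.2 * x.1) := fun x hx => by
    linear_combination (norm := noncomm_ring) - (hpair x hx).s3 - (hpair x hx).tt * x.1
  have u4 : ∀ x ∈ S, x.2 = x.1 * (x.1 * x.2) := fun x hx => by
    linear_combination (norm := noncomm_ring) - t3 x hx + (hpair x hx).tt * x.2
  have v1 : (s * s - t * t) * s = 0 := s4 _ fun x hx => by
    have : t * t * x.1 = x.1 := by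
      rw [u3 x hx, ← mul_assoc, u2 x hx]
    rw [sub_mul, u1 x hx, this, sub_self]
  have v2 : (s * s - t * t) * t = 0 := t4 _ fun x hx => by
    have : s * s * x.2 = x.2 := by
      rw [u4 x hx, ← mul_assoc, u1 x hx]
    rw [sub_mul, u2 x hx, this, sub_self]
  have v3 : s * s = t * t := by
    have w := congrArg star v1
    simp only [star_mul, star_sub, s1, t1, star_zero] at w
    linear_combination (norm := noncomm_ring) s * w + v2 * t - s * s2 + t * t2
  have v4 : (s * t + t * s) * s = 0 := s4 _ fun x hx => by
    have X := hpair x hx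
    have a : s * t * x.1 = - x.2 := by
      have c1 : t * x.1 = x.2 * x.1 := by
        have : t * x.1 = t * x.2 * (x.2 * x.1) := by
          conv_lhs => rw [u3 x hx]
          rw [mul_assoc]
        rw [this, t3' hx]
        linear_combination (norm := noncomm_ring) t3 x hx * x.1
      linear_combination (norm := noncomm_ring) s * c1 + s * X.anti - s3 hx * x.2 + u4 x hx
    have b : t * s * x.1 = x.2 := by
      linear_combination (norm := noncomm_ring) t * s3 hx - t * X.tt + t3' hx * x.2 + t3 x hx
    rw [add_mul, a, b, neg_add_cancel]
  have v5 : s * t + t * s = 0 := by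
    linear_combination (norm := noncomm_ring) v4 * s - s * t * v3 - s * t2 - t * s2
  have hps : p * s = s := by
    have : (1 - p) * s = 0 := s4 _ fun x hx => by
      rw [sub_mul, (hpair x hx).rs, one_mul, sub_self]
    linear_combination (norm := noncomm_ring) - this
  have hsp : s * p = s := by
    have := congrArg star hps
    simpa only [star_mul, s1, hp] using this
  have hfull : s * s = p := by
    by_contra hne
    have hr0 : p - s * s ≠ 0 := fun h => hne (sub_eq_zero.1 h).symm
    obtain ⟨a, b, hab, ha0⟩ := exists_local_pair M hM (r := p - s * s)
      (by rw [star_sub, star_mul, hp, s1])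
      (by linear_combination (norm := noncomm_ring) hpp - hps * s - s * hsp + s2 * s)
      (sub_mem hpM (mul_mem sM sM)) hr0
    have har : a * (p - s * s) = a := by
      have := congrArg star hab.rs
      simpa only [star_mul, star_sub, s1, hp, hab.ss] using this
    have hab' : IsPair M p a b := by
      refine ⟨hab.sM, hab.tM, hab.ss, hab.st, hab.s3, hab.tt, hab.anti, ?_⟩
      linear_combination (norm := noncomm_ring) - p * hab.rs + hpp * a - hps * s * a + hab.rs
    have z1 : ∀ x ∈ S, a * x.1 = 0 := fun x hx => by
      linear_combination (norm := noncomm_ring) - har * x.1 + a * (hpair x hx).rs - a * u1 x hx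
    have z2 : ∀ x ∈ S, x.1 * a = 0 := fun x hx => by
      have := congrArg star (z1 x hx)
      simpa only [star_mul, (hpair x hx).ss, hab.ss, star_zero] using this
    have hins : insert (a, b) S ⊆ S := by
      apply hmax _ (Set.subset_insert _ _)
      refine ⟨?_, ?_⟩
      · rintro x (rfl | hx)
        · exact hab'
        · exact hpair x hx
      · rintro x (rfl | hx) y (rfl | hy) hxy
        · exact absurd rfl hxy
        · exact z1 y hy
        · exact z2 x hx
        · exact horth x hx y hy hxy
    have hmem : (a, b) ∈ S := hins (Set.mem_insert _ _)
    have := z1 _ hmem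
    apply ha0
    rw [← hab.s3]
    simp only at this
    rw [this, zero_mul]
  exact ⟨s, t, sM, tM, s1, t1, hfull, v3 ▸ hfull, v5⟩

/-- if `M` is a continuous von Neumann algebra and `p ∈ M` is a projection,
then every triple homomorphism `pM → ℂ` is identically zero. -/
theorem triple_hom_corner_of_continuous_eq_zero
    (M : VonNeumannAlgebra H) (hM : IsContinuousVNA M)
    (p : H →L[ℂ] H) (hp : p ∈ M) (hpProj : IsProjection p)
    (f : ↥(corner M p) →ₗ[ℂ] ℂ)
    (hf : ∀ (a b c : ↥(corner M p)) (h : jtri (a : H →L[ℂ] H) b c ∈ corner M p),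
      f ⟨jtri (a : H →L[ℂ] H) b c, h⟩ = f a * (starRingEnd ℂ) (f b) * f c) :
    f = 0 := by
  have hp1 : star p = p := hpProj.1
  have hpp : p * p = p := hpProj.2
  have memc : ∀ x ∈ M, p * x ∈ corner M p := fun x hx => ⟨x, hx, rfl⟩
  have memc' : ∀ x ∈ M, p * x = x → x ∈ corner M p := fun x hx h => h ▸ memc x hx
  have hj : ∀ x y z : H →L[ℂ] H, jtri x y z = (2 : ℂ)⁻¹ • (x * star y * z + z * star y * x) :=
    fun x y z => rfl
  have pc : p ∈ corner M p := memc' p hp hpp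
  have key : ∀ (a b c d : H →L[ℂ] H) (ha : a ∈ corner M p) (hb : b ∈ corner M p)
      (hc : c ∈ corner M p) (hd : d ∈ corner M p), a * star b * c + c * star b * a = d + d →
      f ⟨d, hd⟩ = f ⟨a, ha⟩ * (starRingEnd ℂ) (f ⟨b, hb⟩) * f ⟨c, hc⟩ := by
    intro a b c d ha hb hc hd h
    have e : jtri a b c = d := by
      rw [hj, h, ← two_smul ℂ d, smul_smul]
      norm_num
    subst e
    exact hf ⟨a, ha⟩ ⟨b, hb⟩ ⟨c, hc⟩ hd
  obtain ⟨s, t, sM, tM, s1, t1, ss, tt, st⟩ := exists_full_pair M hM hp1 hpp hp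
  have hs3 : p * s = s := by
    have h0 : p * s - s = 0 := by
      apply CStarRing.mul_star_self_eq_zero_iff _ |>.1
      simp only [star_mul, star_sub, s1, hp1]
      linear_combination (norm := noncomm_ring)
        p * ss * p - p * ss - ss * p + ss + hpp * p - hpp
    exact sub_eq_zero.1 h0
  have ht3 : p * t = t := by
    have h0 : p * t - t = 0 := by
      apply CStarRing.mul_star_self_eq_zero_iff _ |>.1
      simp only [star_mul, star_sub, t1, hp1]
      linear_combination (norm := noncomm_ring)
        p * tt * p - p * tt - tt * p + tt + hpp * p - hpp
    exact sub_eq_zero.1 h0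
  have hsp : s * p = s := by
    have := congrArg star hs3
    simpa only [star_mul, s1, hp1] using this
  have htp : t * p = t := by
    have := congrArg star ht3
    simpa only [star_mul, t1, hp1] using this
  have sc := memc' s sM hs3
  have tc := memc' t tM ht3
  have k1 := key s p s p sc pc sc pc (by rw [hp1, hsp, ss])
  have k2 := key t p t p tc pc tc pc (by rw [hp1, htp, tt])
  have k3 := key s p t 0 sc pc tc (zero_mem _) (by rw [hp1, hsp, htp, st, add_zero])
  have hz : f ⟨0, zero_mem _⟩ = 0 := f.map_zero
  rw [hz] at k3
  have fp : f ⟨p, pc⟩ = 0 := by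
    rcases mul_eq_zero.1 k3.symm with h | h
    · rw [k1, h, zero_mul]
    · rw [k2, h, mul_zero]
  have split : ∀ (x : H →L[ℂ] H) (hx : x ∈ corner M p) (hxp : x * p ∈ corner M p), p * x = x →
      f ⟨x, hx⟩ + f ⟨x * p, hxp⟩ = 0 := by
    intro x hx hxp h
    have hsum : (2:ℂ)⁻¹ • (x + x * p) ∈ corner M p :=
      Submodule.smul_mem _ _ (Submodule.add_mem _ hx hxp)
    have := key p p x _ pc pc hx hsum (by
      rw [hp1, hpp, h, mul_assoc, hpp, ← two_smul ℂ ((2:ℂ)⁻¹ • (x + x * p)), smul_smul]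
      norm_num)
    rw [fp] at this
    have e : (⟨(2:ℂ)⁻¹ • (x + x * p), hsum⟩ : corner M p) =
      (2:ℂ)⁻¹ • ((⟨x, hx⟩ : corner M p) + ⟨x * p, hxp⟩) := rfl
    rw [e, map_smul, map_add] at this
    simpa using this
  ext ⟨x, hx⟩
  obtain ⟨y, hyM, rfl⟩ := hx
  have hyM' : y ∈ M := hyM
  have hyc : p * y ∈ corner M p := memc y hyM'
  have hxM : p * y ∈ M := mul_mem hp hyM'
  have hpx : p * (p * y) = p * y := by rw [← mul_assoc, hpp]
  have hxpc : p * y * p ∈ corner M p := memc' _ (mul_mem hxM hp) (by rw [← mul_assoc, hpx])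
  have hxpp : p * y * p * p = p * y * p := by rw [mul_assoc, hpp]
  have hxppc : p * y * p * p ∈ corner M p := by rw [hxpp]; exact hxpc
  have w1 := split (p * y) hyc hxpc hpx
  have w2 := split (p * y * p) hxpc hxppc (by rw [← mul_assoc, hpx])
  have w3 : f ⟨p * y * p * p, hxppc⟩ = f ⟨p * y * p, hxpc⟩ := by
    congr 1
    exact Subtype.ext hxpp
  rw [w3] at w2
  change f ⟨p * y, hyc⟩ = 0
  linear_combination w1 - w2 / 2
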